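/- Let (L_l)_{l≥1} be any sequence of real numbers and define S_0 := 0 and S_k := max(S_{k−1}, 1)·L_k for k ≥ 1. Then for every m ≥ 0, max(S_m, 1) = Σ_{k=0}^{m} (1 − S_k)⁺ · Π_{l=k+1}^{m} L_l, where the empty product equals 1 and x⁺ := max(x, 0). -/

import Mathlib

/-!
By `x ⊔ c = x + (c - x)⁺`, the sequence `S k ⊔ c` solves the inhomogeneous linear recurrence
`x (k + 1) = x k * L (k + 1) + b (k + 1)` with forcing term `b k = (c - S k)⁺`. The CUSUM identity
is its variation-of-constants formula.
-/

section LinearRecurrence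

variable {R : Type*} [CommSemiring R]

theorem sum_range_mul_prod_Icc_succ (a b : ℕ → R) (n : ℕ) :
    ∑ k ∈ Finset.range (n + 2), b k * ∏ l ∈ Finset.Icc (k + 1) (n + 1), a l
      = (∑ k ∈ Finset.range (n + 1), b k * ∏ l ∈ Finset.Icc (k + 1) n, a l) * a (n + 1)
        + b (n + 1) := by
  have prod_split : ∀ k ∈ Finset.range (n + 1),
      b k * ∏ l ∈ Finset.Icc (k + 1) (n + 1), a l
        = (b k * ∏ l ∈ Finset.Icc (k + 1) n, a l) * a (n + 1) := fun k hk => by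
    have hkn : k + 1 ≤ n + 1 := Finset.mem_range.mp hk
    rw [Finset.prod_Icc_succ_top hkn, mul_assoc]
  have last_prod : ∏ l ∈ Finset.Icc (n + 1 + 1) (n + 1), a l = 1 := by simp
  rw [Finset.sum_range_succ, Finset.sum_congr rfl prod_split, Finset.sum_mul, last_prod, mul_one]

theorem eq_sum_mul_prod_of_linear_recurrence {x a b : ℕ → R} (hzero : x 0 = b 0)
    (hsucc : ∀ n, x (n + 1) = x n * a (n + 1) + b (n + 1)) (n : ℕ) :
    x n = ∑ k ∈ Finset.range (n + 1), b k * ∏ l ∈ Finset.Icc (k + 1) n, a l := by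
  induction n with
  | zero => simpa using hzero
  | succ n ih => rw [hsucc, ih, sum_range_mul_prod_Icc_succ]

end LinearRecurrence

theorem cusum_recursion_identity_general {R : Type*} [CommRing R] [Lattice R] [AddLeftMono R]
    {L S : ℕ → R} {c : R} (hS0 : S 0 = 0)
    (hrec : ∀ k, S (k + 1) = (S k ⊔ c) * L (k + 1)) (m : ℕ) :
    S m ⊔ c
      = ∑ k ∈ Finset.range (m + 1), (c - S k)⁺ * ∏ l ∈ Finset.Icc (k + 1) m, L l := by
  have sup_at_zero : S 0 ⊔ c = (c - S 0)⁺ := by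
    rw [sup_comm, sup_eq_add_posPart_sub, hS0, zero_add]
  have sup_at_succ (k : ℕ) :
      S (k + 1) ⊔ c = (S k ⊔ c) * L (k + 1) + (c - S (k + 1))⁺ := by
    rw [sup_comm, sup_eq_add_posPart_sub, ← hrec]
  exact eq_sum_mul_prod_of_linear_recurrence (x := fun k => S k ⊔ c) (b := fun k => (c - S k)⁺)
    sup_at_zero sup_at_succ m

/-- The deterministic CUSUM identity: if `S_0 = 0` and
`S_k = max(S_{k−1}, 1)·L_k` for `k ≥ 1`, then for every `m ≥ 0`,
`max(S_m, 1) = Σ_{k=0}^{m} (1 − S_k)⁺ · Π_{l=k+1}^{m} L_l`. -/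
theorem cusum_recursion_identity (L S : ℕ → ℝ) (hS0 : S 0 = 0)
    (hrec : ∀ k : ℕ, S (k + 1) = max (S k) 1 * L (k + 1)) (m : ℕ) :
    max (S m) 1
      = ∑ k ∈ Finset.range (m + 1), max (1 - S k) 0 * ∏ l ∈ Finset.Icc (k + 1) m, L l :=
  cusum_recursion_identity_general hS0 hrec m
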